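/- arXiv:1803.08304 — 4 statements merged into one kernel-verified Lean document; each statement's English description precedes it below -/
import Mathlib

section
/- Let A and B be two finite persistence barcodes and 1 ≤ p ≤ ∞. Let π(A) = {[0, ℓ_i^a]}_{i=1}^{n_a} and π(B) = {[0, ℓ_i^b]}_{i=1}^{n_b} be the barcodes obtained by translating every interval to start at the origin. Then d_p(π(A), π(B)) ≤ 2 · d_p(A, B). -/
open Finset

/-- A finite persistence barcode with `n` intervals is given by endpoint functions
`x y : Fin n → ℝ` with `x i ≤ y i` (zero-length intervals serve as padding).
`pcost` is the cost of matching interval `i` of `(xa, ya)` with interval `γ i` of `(xb, yb)`. -/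
noncomputable def pcost {n : ℕ} (xa ya xb yb : Fin n → ℝ) (γ : Equiv.Perm (Fin n)) (i : Fin n) : ℝ :=
  max |xa i - xb (γ i)| |ya i - yb (γ i)|

/-- `p`-th Wasserstein distance between barcodes with `n` intervals each:
`d_p(A,B) = min_γ (Σ_i max{|x_i^a − x_{γ(i)}^b|, |y_i^a − y_{γ(i)}^b|}^p)^(1/p)`. -/
noncomputable def dW {n : ℕ} (p : ℝ) (xa ya xb yb : Fin n → ℝ) : ℝ :=
  (Finset.univ : Finset (Equiv.Perm (Fin n))).inf' Finset.univ_nonempty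
    (fun γ => (∑ i, (pcost xa ya xb yb γ i) ^ p) ^ (1 / p))

/-- Bottleneck distance `d_∞(A,B) = min_γ max_i max{|x_i^a − x_{γ(i)}^b|, |y_i^a − y_{γ(i)}^b|}`. -/
noncomputable def dInf {n : ℕ} (xa ya xb yb : Fin n → ℝ) : ℝ :=
  (Finset.univ : Finset (Equiv.Perm (Fin n))).inf' Finset.univ_nonempty
    (fun γ => ⨆ i, pcost xa ya xb yb γ i)

theorem inf'_le_apply_inf' {ι α β : Type*} [SemilatticeInf α] [LinearOrder β] {s : Finset ι}
    (hs : s.Nonempty) {f : ι → α} {g : ι → β} {φ : β → α} (h : ∀ i ∈ s, f i ≤ φ (g i)) :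
    s.inf' hs f ≤ φ (s.inf' hs g) := by
  obtain ⟨i, hi, hmin⟩ := s.exists_mem_eq_inf' hs g
  rw [hmin]
  exact (s.inf'_le f hi).trans (h i hi)

theorem rpow_sum_const_mul_rpow {ι : Type*} (s : Finset ι) {f : ι → ℝ} {c p : ℝ}
    (hf : ∀ i ∈ s, 0 ≤ f i) (hc : 0 ≤ c) (hp : p ≠ 0) :
    (∑ i ∈ s, (c * f i) ^ p) ^ (1 / p) = c * (∑ i ∈ s, f i ^ p) ^ (1 / p) :=
  calc (∑ i ∈ s, (c * f i) ^ p) ^ (1 / p)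
      = (c ^ p * ∑ i ∈ s, f i ^ p) ^ (1 / p) := by
        rw [mul_sum, sum_congr rfl fun i hi ↦ Real.mul_rpow hc (hf i hi)]
    _ = (c ^ p) ^ (1 / p) * (∑ i ∈ s, f i ^ p) ^ (1 / p) :=
        Real.mul_rpow (Real.rpow_nonneg hc p)
          (sum_nonneg fun i hi ↦ Real.rpow_nonneg (hf i hi) p)
    _ = c * (∑ i ∈ s, f i ^ p) ^ (1 / p) := by
        rw [one_div, Real.rpow_rpow_inv hc hp]

theorem rpow_sum_rpow_le_rpow_sum_rpow {ι : Type*} (s : Finset ι) {f g : ι → ℝ} {p : ℝ}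
    (hf : ∀ i ∈ s, 0 ≤ f i) (hfg : ∀ i ∈ s, f i ≤ g i) (hp : 0 ≤ p) :
    (∑ i ∈ s, f i ^ p) ^ (1 / p) ≤ (∑ i ∈ s, g i ^ p) ^ (1 / p) :=
  Real.rpow_le_rpow (sum_nonneg fun i hi ↦ Real.rpow_nonneg (hf i hi) p)
    (sum_le_sum fun i hi ↦ Real.rpow_le_rpow (hf i hi) (hfg i hi) hp) (one_div_nonneg.2 hp)

section Barcode

variable {n : ℕ} {xa ya xb yb : Fin n → ℝ}

theorem pcost_nonneg (γ : Equiv.Perm (Fin n)) (i : Fin n) : 0 ≤ pcost xa ya xb yb γ i :=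
  le_max_of_le_left (abs_nonneg _)

theorem pcost_zero_sub_le_two_mul_pcost (γ : Equiv.Perm (Fin n)) (i : Fin n) :
    pcost (fun _ ↦ 0) (fun i ↦ ya i - xa i) (fun _ ↦ 0) (fun i ↦ yb i - xb i) γ i ≤
      2 * pcost xa ya xb yb γ i :=
  calc max |(0 : ℝ) - 0| |ya i - xa i - (yb (γ i) - xb (γ i))|
      = |ya i - xa i - (yb (γ i) - xb (γ i))| := by simp
    _ ≤ |ya i - yb (γ i)| + |xa i - xb (γ i)| := by
        simpa only [Real.dist_eq] using dist_sub_sub_le (ya i) (xa i) (yb (γ i)) (xb (γ i))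
    _ ≤ pcost xa ya xb yb γ i + pcost xa ya xb yb γ i :=
        add_le_add (le_max_right _ _) (le_max_left _ _)
    _ = 2 * pcost xa ya xb yb γ i := (two_mul _).symm

variable {xa' ya' xb' yb' : Fin n → ℝ} {c : ℝ}

theorem dW_le_mul_dW {p : ℝ} (hp : 0 < p) (hc : 0 ≤ c)
    (h : ∀ γ i, pcost xa' ya' xb' yb' γ i ≤ c * pcost xa ya xb yb γ i) :
    dW p xa' ya' xb' yb' ≤ c * dW p xa ya xb yb := by
  refine inf'_le_apply_inf' univ_nonempty (φ := (c * ·)) fun γ _ ↦ ?_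
  calc (∑ i, pcost xa' ya' xb' yb' γ i ^ p) ^ (1 / p)
      ≤ (∑ i, (c * pcost xa ya xb yb γ i) ^ p) ^ (1 / p) :=
        rpow_sum_rpow_le_rpow_sum_rpow univ (fun i _ ↦ pcost_nonneg γ i) (fun i _ ↦ h γ i) hp.le
    _ = c * (∑ i, pcost xa ya xb yb γ i ^ p) ^ (1 / p) :=
        rpow_sum_const_mul_rpow univ (fun i _ ↦ pcost_nonneg γ i) hc hp.ne'

theorem dInf_le_mul_dInf (hc : 0 ≤ c)
    (h : ∀ γ i, pcost xa' ya' xb' yb' γ i ≤ c * pcost xa ya xb yb γ i) :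
    dInf xa' ya' xb' yb' ≤ c * dInf xa ya xb yb := by
  refine inf'_le_apply_inf' univ_nonempty (φ := (c * ·)) fun γ _ ↦ ?_
  calc ⨆ i, pcost xa' ya' xb' yb' γ i
      ≤ ⨆ i, c * pcost xa ya xb yb γ i := ciSup_mono (Set.finite_range _).bddAbove (h γ)
    _ = c * ⨆ i, pcost xa ya xb yb γ i := (Real.mul_iSup_of_nonneg hc _).symm

end Barcode

theorem projection_pi_inequality_general {n : ℕ} (xa ya xb yb : Fin n → ℝ) :
    (∀ p : ℝ, 0 < p →
      dW p (fun _ ↦ 0) (fun i ↦ ya i - xa i) (fun _ ↦ 0) (fun i ↦ yb i - xb i) ≤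
        2 * dW p xa ya xb yb) ∧
    dInf (fun _ ↦ 0) (fun i ↦ ya i - xa i) (fun _ ↦ 0) (fun i ↦ yb i - xb i) ≤
      2 * dInf xa ya xb yb :=
  ⟨fun _ hp ↦ dW_le_mul_dW hp zero_le_two pcost_zero_sub_le_two_mul_pcost,
    dInf_le_mul_dInf zero_le_two pcost_zero_sub_le_two_mul_pcost⟩

/-- for the projection `π(A) = {[0, ℓ_i^a]}` translating every interval to
start at the origin, `d_p(π(A), π(B)) ≤ 2·d_p(A,B)` for all `1 ≤ p ≤ ∞`. -/
theorem projection_pi_inequality {n : ℕ} (xa ya xb yb : Fin n → ℝ)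
    (hA : ∀ i, xa i ≤ ya i) (hB : ∀ i, xb i ≤ yb i) :
    (∀ p : ℝ, 1 ≤ p →
      dW p (fun _ => (0 : ℝ)) (fun i => ya i - xa i) (fun _ => (0 : ℝ)) (fun i => yb i - xb i) ≤
        2 * dW p xa ya xb yb) ∧
    dInf (fun _ => (0 : ℝ)) (fun i => ya i - xa i) (fun _ => (0 : ℝ)) (fun i => yb i - xb i) ≤
      2 * dInf xa ya xb yb := by
  obtain ⟨hW, hInf⟩ := projection_pi_inequality_general xa ya xb yb
  exact ⟨fun p hp ↦ hW p (zero_lt_one.trans_le hp), hInf⟩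
end

section
/- Fix 1 ≤ p ≤ ∞ and a constant C ∈ ℝ. Let A and B be two persistence barcodes (each a finite multiset of intervals, possibly containing infinite intervals [x, ∞)), and let φ replace every infinite interval [x, ∞) by [x, C], leaving finite intervals unchanged. Then d_p(φ(A), φ(B)) ≤ d_p(A, B). -/
/-!
A matching of finite cost pairs infinite intervals with infinite intervals. After `φ`, the right
endpoints of such a pair are both `C`, and `|C - C| = 0` agrees with the convention `|∞ - ∞| = 0`;
pairs of finite intervals are untouched. So every matching of finite cost keeps all its individual
costs, while `φ` only admits further matchings to the minimum. How the individual costs are combined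
(an `ℓ^p` norm, a maximum) is irrelevant.
-/

open Finset

/-- A barcode possibly containing infinite intervals is modelled by endpoints
`x y : Fin n → ℝ` together with a set `I` of indices of infinite intervals `[x_i, ∞)`
(the value `y i` is irrelevant for `i ∈ I`).  By the convention `|∞ − ∞| = 0`, the
bijections achieving a finite distance are exactly those matching infinite intervals
with infinite intervals; `icost` is the resulting matching cost. -/
noncomputable def icost {n : ℕ} (xa ya xb yb : Fin n → ℝ) (Ia : Finset (Fin n))
    (γ : Equiv.Perm (Fin n)) (i : Fin n) : ℝ :=
  max |xa i - xb (γ i)| (if i ∈ Ia then 0 else |ya i - yb (γ i)|)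

/-- `p`-th Wasserstein distance (`1 ≤ p < ∞`) between barcodes with infinite intervals. -/
noncomputable def dWi {n : ℕ} (p : ℝ) (xa ya xb yb : Fin n → ℝ)
    (Ia Ib : Finset (Fin n)) : ℝ :=
  sInf { r : ℝ | ∃ γ : Equiv.Perm (Fin n), (∀ i, i ∈ Ia ↔ γ i ∈ Ib) ∧
    r = (∑ i, (icost xa ya xb yb Ia γ i) ^ p) ^ (1 / p) }

/-- Bottleneck distance between barcodes with infinite intervals. -/
noncomputable def dInfi {n : ℕ} (xa ya xb yb : Fin n → ℝ) (Ia Ib : Finset (Fin n)) : ℝ :=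
  sInf { r : ℝ | ∃ γ : Equiv.Perm (Fin n), (∀ i, i ∈ Ia ↔ γ i ∈ Ib) ∧
    r = ⨆ i, icost xa ya xb yb Ia γ i }

open scoped Pointwise in
theorem exists_perm_forall_mem_iff_of_card_eq {ι : Type*} {s t : Finset ι} (h : #s = #t) :
    ∃ γ : Equiv.Perm ι, ∀ i, i ∈ s ↔ γ i ∈ t := by
  classical
  obtain ⟨γ, hγ⟩ := Set.powersetCard.isPretransitive.exists_smul_eq
    (⟨s, rfl⟩ : Set.powersetCard ι #s) ⟨t, h.symm⟩
  have image_eq : γ • s = t := congrArg Subtype.val hγ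
  exact ⟨γ, fun i => by rw [← image_eq, ← Equiv.Perm.smul_def, smul_mem_smul_finset_iff]⟩

section Projection

variable {n : ℕ}

/-- The effect of the projection `φ` on right endpoints: those indexed by `I`, which belong to the
infinite intervals, become `C`. Left endpoints are unchanged by `φ`, so they do not appear. -/
def capInfinite (C : ℝ) (I : Finset (Fin n)) (y : Fin n → ℝ) (i : Fin n) : ℝ :=
  if i ∈ I then C else y i

theorem pcost_capInfinite_eq_icost (C : ℝ) (xa ya xb yb : Fin n → ℝ) {Ia Ib : Finset (Fin n)}
    {γ : Equiv.Perm (Fin n)} (hγ : ∀ i, i ∈ Ia ↔ γ i ∈ Ib) :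
    pcost xa (capInfinite C Ia ya) xb (capInfinite C Ib yb) γ = icost xa ya xb yb Ia γ := by
  funext i
  by_cases hi : i ∈ Ia
  · simp [pcost, icost, capInfinite, hi, (hγ i).mp hi]
  · simp [pcost, icost, capInfinite, hi, mt (hγ i).mpr hi]

theorem projection_phi_inequality_general {α : Type*} [ConditionallyCompleteLattice α]
    (F : (Fin n → ℝ) → α) (C : ℝ) (xa ya xb yb : Fin n → ℝ) {Ia Ib : Finset (Fin n)}
    (hcard : #Ia = #Ib) :
    univ.inf' univ_nonempty
        (fun γ => F (pcost xa (capInfinite C Ia ya) xb (capInfinite C Ib yb) γ)) ≤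
      sInf {r | ∃ γ : Equiv.Perm (Fin n), (∀ i, i ∈ Ia ↔ γ i ∈ Ib) ∧
        r = F (icost xa ya xb yb Ia γ)} := by
  obtain ⟨γ₀, hγ₀⟩ := exists_perm_forall_mem_iff_of_card_eq hcard
  refine le_csInf ⟨_, γ₀, hγ₀, rfl⟩ ?_
  rintro _ ⟨γ, hγ, rfl⟩
  rw [← pcost_capInfinite_eq_icost C xa ya xb yb hγ]
  exact inf'_le _ (mem_univ γ)

end Projection

/-- the projection `φ` replacing every infinite interval `[x,∞)` by `[x,C]`
(and leaving finite intervals unchanged) does not increase the distance: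
`d_p(φ(A), φ(B)) ≤ d_p(A,B)` for every `1 ≤ p ≤ ∞`.  (Both barcodes are assumed to have
the same number of infinite intervals, so that `d_p(A,B)` is finite.) -/
theorem projection_phi_inequality {n : ℕ} (C : ℝ)
    (xa ya xb yb : Fin n → ℝ) (Ia Ib : Finset (Fin n))
    (hcard : Ia.card = Ib.card)
    (hA : ∀ i ∉ Ia, xa i ≤ ya i) (hB : ∀ i ∉ Ib, xb i ≤ yb i) :
    (∀ p : ℝ, 1 ≤ p →
      dW p xa (fun i => if i ∈ Ia then C else ya i)
          xb (fun i => if i ∈ Ib then C else yb i) ≤ dWi p xa ya xb yb Ia Ib) ∧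
    dInf xa (fun i => if i ∈ Ia then C else ya i)
        xb (fun i => if i ∈ Ib then C else yb i) ≤ dInfi xa ya xb yb Ia Ib := by
  constructor
  · intro p _
    exact projection_phi_inequality_general (fun c => (∑ i, c i ^ p) ^ (1 / p)) C xa ya xb yb hcard
  · exact projection_phi_inequality_general (fun c => ⨆ i, c i) C xa ya xb yb hcard
end

section
/- Let P = (p_1, …, p_n) and Q = (q_1, …, q_n) be two finite probability distributions (p_i, q_i ≥ 0 and Σ p_i = Σ q_i = 1), with Shannon entropies E_S(P) = −Σ_i p_i log p_i and E_S(Q) = −Σ_i q_i log q_i. If ‖P − Q‖₁ = Σ_i |p_i − q_i| ≤ 1/2, then |E_S(P) − E_S(Q)| ≤ ‖P − Q‖₁ · log n − ‖P − Q‖₁ · log ‖P − Q‖₁. -/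
open Finset

/-- Shannon entropy `E_S(P) = −Σ_i p_i log p_i` of a finite probability distribution
(note `Real.log 0 = 0`, which realizes the convention `0·log 0 = 0`). -/
noncomputable def shannonEntropy {n : ℕ} (P : Fin n → ℝ) : ℝ :=
  -∑ i, P i * Real.log (P i)

/-!
Write `η = negMulLog`. Since `η` is concave on `[0, 1]` and vanishes at both endpoints, translating
a chord of horizontal length `d` to either end of the interval gives
`|η x - η y| ≤ max (η d) (η (1 - d))` with `d = |x - y|`, and the maximum is `η d` once `d ≤ 1 / 2`.
Summing over coordinates reduces the theorem to `∑ i, η (d i) ≤ D log n + η D` with `D = ∑ i, d i`,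
which is Jensen's inequality for `η` with uniform weights.
-/

lemma map_add_map_le_of_concaveOn {𝕜 E β : Type*} [Semiring 𝕜] [PartialOrder 𝕜] [AddCommGroup E]
    [Module 𝕜 E] [AddCommMonoid β] [PartialOrder β] [IsOrderedAddMonoid β] [Module 𝕜 β]
    {s : Set E} {f : E → β} (hf : ConcaveOn 𝕜 s f) {x y z : E} (hx : x ∈ s) (hy : y ∈ s)
    (hz : z ∈ segment 𝕜 x y) : f x + f y ≤ f z + f (x + y - z) := by
  obtain ⟨a, b, ha, hb, hab, rfl⟩ := hz
  have hba : b + a = 1 := by rw [add_comm, hab]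
  have reflect : x + y - (a • x + b • y) = b • x + a • y := by
    rw [sub_eq_iff_eq_add, add_add_add_comm, ← add_smul, ← add_smul, hab, hba, one_smul, one_smul]
  calc f x + f y = (a • f x + b • f y) + (b • f x + a • f y) := by
        rw [add_add_add_comm, ← add_smul, ← add_smul, hab, hba, one_smul, one_smul]
    _ ≤ f (a • x + b • y) + f (b • x + a • y) :=
        add_le_add (hf.2 hx hy ha hb hab) (hf.2 hx hy hb ha hba)
    _ = f (a • x + b • y) + f (x + y - (a • x + b • y)) := by rw [reflect]

lemma abs_map_sub_map_le_max_of_concaveOn {𝕜 : Type*} [Field 𝕜] [LinearOrder 𝕜]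
    [IsStrictOrderedRing 𝕜] {f : 𝕜 → 𝕜} {a b x y : 𝕜} (hf : ConcaveOn 𝕜 (Set.Icc a b) f)
    (ha : 0 ≤ f a) (hb : 0 ≤ f b) (hx : x ∈ Set.Icc a b) (hy : y ∈ Set.Icc a b) :
    |f x - f y| ≤ max (f (a + |x - y|)) (f (b - |x - y|)) := by
  wlog hxy : x ≤ y generalizing x y
  · rw [abs_sub_comm (f x), abs_sub_comm x]
    exact this hy hx (le_of_not_ge hxy)
  have hab : a ≤ b := hx.1.trans hx.2
  have left_end : f a + f y ≤ f x + f (a + y - x) :=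
    map_add_map_le_of_concaveOn hf (Set.left_mem_Icc.2 hab) hy (Icc_subset_segment ⟨hx.1, hxy⟩)
  have right_end : f x + f b ≤ f y + f (x + b - y) :=
    map_add_map_le_of_concaveOn hf hx (Set.right_mem_Icc.2 hab) (Icc_subset_segment ⟨hxy, hy.2⟩)
  rw [abs_sub_comm x, abs_of_nonneg (sub_nonneg.2 hxy), abs_sub_comm, ← add_sub_assoc,
    show b - (y - x) = x + b - y by ring, abs_sub_le_iff]
  exact ⟨le_max_of_le_left (by linarith), le_max_of_le_right (by linarith)⟩

lemma negMulLog_one_sub_le_negMulLog {x : ℝ} (hx : 0 ≤ x) (hx' : x ≤ 1 / 2) :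
    Real.negMulLog (1 - x) ≤ Real.negMulLog x := by
  obtain rfl | hx := hx.eq_or_lt
  · simp
  have slope_le : slope Real.log 1 (1 - x) ≤ slope Real.log 1 x :=
    strictConcaveOn_log_Ioi.concaveOn.slope_anti (Set.mem_Ioi.2 one_pos)
      ⟨hx, by simp only [Set.mem_singleton_iff]; linarith⟩
      ⟨by simp only [Set.mem_Ioi]; linarith, by simp only [Set.mem_singleton_iff]; linarith⟩
      (by linarith)
  have hx1 : 0 < 1 - x := by linarith
  have log_div_le : Real.log x / (1 - x) ≤ Real.log (1 - x) / x := by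
    simpa only [slope_def_field, Real.log_one, sub_zero, sub_sub_cancel_left, div_neg,
      ← neg_sub 1 x, neg_le_neg_iff] using slope_le
  rw [div_le_div_iff₀ hx1 hx] at log_div_le
  simp only [Real.negMulLog]
  linarith

lemma abs_negMulLog_sub_le {x y : ℝ} (hx : x ∈ Set.Icc 0 1) (hy : y ∈ Set.Icc 0 1)
    (hxy : |x - y| ≤ 1 / 2) :
    |Real.negMulLog x - Real.negMulLog y| ≤ Real.negMulLog |x - y| := by
  have concave : ConcaveOn ℝ (Set.Icc 0 1) Real.negMulLog :=
    Real.concaveOn_negMulLog.subset Set.Icc_subset_Ici_self (convex_Icc 0 1)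
  calc |Real.negMulLog x - Real.negMulLog y|
      ≤ max (Real.negMulLog (0 + |x - y|)) (Real.negMulLog (1 - |x - y|)) :=
        abs_map_sub_map_le_max_of_concaveOn concave (by simp) (by simp) hx hy
    _ = Real.negMulLog |x - y| := by
        rw [zero_add, max_eq_left (negMulLog_one_sub_le_negMulLog (abs_nonneg _) hxy)]

lemma sum_negMulLog_le {ι : Type*} (s : Finset ι) {f : ι → ℝ} (hf : ∀ i ∈ s, 0 ≤ f i) :
    ∑ i ∈ s, Real.negMulLog (f i) ≤
      (∑ i ∈ s, f i) * Real.log #s + Real.negMulLog (∑ i ∈ s, f i) := by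
  obtain rfl | hs := s.eq_empty_or_nonempty
  · simp
  have hcard : (0 : ℝ) < #s := by exact_mod_cast hs.card_pos
  have jensen : (#s : ℝ)⁻¹ * ∑ i ∈ s, Real.negMulLog (f i) ≤
      Real.negMulLog ((#s : ℝ)⁻¹ * ∑ i ∈ s, f i) := by
    simpa only [smul_eq_mul, ← mul_sum] using
      Real.concaveOn_negMulLog.le_map_sum (t := s) (w := fun _ ↦ (#s : ℝ)⁻¹) (p := f)
        (fun _ _ ↦ inv_nonneg.2 hcard.le) (by simp [hcard.ne']) hf
  calc ∑ i ∈ s, Real.negMulLog (f i)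
      ≤ #s * Real.negMulLog ((#s : ℝ)⁻¹ * ∑ i ∈ s, f i) := (inv_mul_le_iff₀ hcard).1 jensen
    _ = (∑ i ∈ s, f i) * Real.log #s + Real.negMulLog (∑ i ∈ s, f i) := by
        rw [Real.negMulLog_mul, Real.negMulLog, Real.log_inv]
        field_simp

lemma shannonEntropy_eq_sum_negMulLog {n : ℕ} (P : Fin n → ℝ) :
    shannonEntropy P = ∑ i, Real.negMulLog (P i) := by
  simp only [shannonEntropy, Real.negMulLog, neg_mul, sum_neg_distrib]

theorem shannonEntropy_stability_general {n : ℕ} (P Q : Fin n → ℝ)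
    (hP : ∀ i, P i ∈ Set.Icc 0 1) (hQ : ∀ i, Q i ∈ Set.Icc 0 1)
    (h : ∀ i, |P i - Q i| ≤ 1 / 2) :
    |shannonEntropy P - shannonEntropy Q| ≤
      (∑ i, |P i - Q i|) * Real.log n - (∑ i, |P i - Q i|) * Real.log (∑ i, |P i - Q i|) := by
  calc |shannonEntropy P - shannonEntropy Q|
      = |∑ i, (Real.negMulLog (P i) - Real.negMulLog (Q i))| := by
        rw [shannonEntropy_eq_sum_negMulLog, shannonEntropy_eq_sum_negMulLog, sum_sub_distrib]
    _ ≤ ∑ i, |Real.negMulLog (P i) - Real.negMulLog (Q i)| := abs_sum_le_sum_abs _ _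
    _ ≤ ∑ i, Real.negMulLog |P i - Q i| :=
        sum_le_sum fun i _ ↦ abs_negMulLog_sub_le (hP i) (hQ i) (h i)
    _ ≤ (∑ i, |P i - Q i|) * Real.log #(univ : Finset (Fin n)) +
          Real.negMulLog (∑ i, |P i - Q i|) :=
        sum_negMulLog_le univ fun i _ ↦ abs_nonneg _
    _ = (∑ i, |P i - Q i|) * Real.log n -
          (∑ i, |P i - Q i|) * Real.log (∑ i, |P i - Q i|) := by
        rw [card_fin, Real.negMulLog, neg_mul, ← sub_eq_add_neg]

/-- if `P`, `Q` are finite probability distributions on `n` points with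
`‖P − Q‖₁ ≤ 1/2`, then `|E_S(P) − E_S(Q)| ≤ ‖P−Q‖₁·log n − ‖P−Q‖₁·log ‖P−Q‖₁`
(when `‖P − Q‖₁ = 0` the right-hand side is `0`, as `Real.log 0 = 0`). -/
theorem shannonEntropy_stability {n : ℕ} (P Q : Fin n → ℝ)
    (hP : ∀ i, 0 ≤ P i) (hQ : ∀ i, 0 ≤ Q i)
    (hPsum : ∑ i, P i = 1) (hQsum : ∑ i, Q i = 1)
    (h : ∑ i, |P i - Q i| ≤ 1 / 2) :
    |shannonEntropy P - shannonEntropy Q| ≤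
      (∑ i, |P i - Q i|) * Real.log n - (∑ i, |P i - Q i|) * Real.log (∑ i, |P i - Q i|) := by
  have coord_le (i : Fin n) : |P i - Q i| ≤ ∑ j, |P j - Q j| :=
    single_le_sum (f := fun j ↦ |P j - Q j|) (fun _ _ ↦ abs_nonneg _) (mem_univ i)
  exact shannonEntropy_stability_general P Q (mem_Icc_of_mem_stdSimplex ⟨hP, hPsum⟩)
    (mem_Icc_of_mem_stdSimplex ⟨hQ, hQsum⟩) fun i ↦ (coord_le i).trans h
end

section
/- (Stability of the ES-function.) Let A and B be two finite persistence barcodes with positive total lengths. If the relative error r_∞(A, B) = 2 n_max d_∞(A,B) / L_max is at most 1/4, then ‖S(A) − S(B)‖₁ ≤ −2 L_min · r_∞(A,B) · log( 2 r_∞(A,B) ) + 2 d_∞(A,B) · log(n_max), and consequently ‖S(A) − S(B)‖₁ ≤ 2 r_∞(A,B) · ( −L_min · log( 2 r_∞(A,B) ) + L_max · log(n_max) / n_max ). -/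
open Finset

open MeasureTheory

/-- Total length `L_a = Σ_i (y_i − x_i)` of a barcode. -/
noncomputable def lenSum {n : ℕ} (x y : Fin n → ℝ) : ℝ := ∑ i, (y i - x i)

/-- Entropy summary function (ES-function):
`S(A)(t) = −Σ_i w_i(t)·(ℓ_i/L)·log(ℓ_i/L)` with `w_i(t) = 1` iff `x_i ≤ t ≤ y_i`. -/
noncomputable def ES {n : ℕ} (x y : Fin n → ℝ) (t : ℝ) : ℝ :=
  -∑ i, (if x i ≤ t ∧ t ≤ y i then
    ((y i - x i) / lenSum x y) * Real.log ((y i - x i) / lenSum x y) else 0)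

/-!
Write `φ = negMulLog` and match the intervals of `A` and `B` optimally. Then `S(A)` and `S(B)` are
sums of indicators of matched intervals with coefficients `φ (p i)` and `φ (q i)`, where `p` and `q`
are the relative lengths. Replacing the `i`-th interval of `A` by that of `B` costs at most
`φ (p i) * 2 d` in `L¹`, and these costs add up to at most `2 d log n` because the entropy of a
probability vector is at most `log n`. Replacing the coefficient costs `|φ (p i) - φ (q i)|` times
the length of the interval of `B`, and these costs add up to at most `L_b φ (2 r)` once each
difference of coefficients is at most `φ (2 r)`.

The relative lengths satisfy `|p i - q i| ≤ r (1/n + q i)`, hence `|p i - q i| ≤ r (1/2 + q i)`, as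
`p i = q i = 1` when `n = 1`. This is at most `3r/2`, and at most `r` when `q i ≤ 1/2`. Both
improvements on `2r` matter: `φ` is not monotone up to `1/2`, so `|p i - q i| ≤ 2r` alone would not
give `φ (2 r)` when `2r > 1/e`.
-/

section Concave

lemma concaveOn_add_le_add_of_mem_Icc {𝕜 β : Type*} [Field 𝕜] [LinearOrder 𝕜]
    [IsStrictOrderedRing 𝕜] [AddCommGroup β] [PartialOrder β] [IsOrderedAddMonoid β] [Module 𝕜 β]
    {s : Set 𝕜} {f : 𝕜 → β} (hf : ConcaveOn 𝕜 s f) {a b c : 𝕜} (ha : a ∈ s) (hc : c ∈ s)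
    (hb : b ∈ Set.Icc a c) : f a + f c ≤ f b + f (a + c - b) := by
  obtain ⟨t, u, ht, hu, htu, rfl⟩ : b ∈ segment 𝕜 a c := Icc_subset_segment hb
  have h₁ := hf.2 ha hc ht hu htu
  have h₂ := hf.2 ha hc hu ht (by rwa [add_comm])
  have reflect : a + c - (t • a + u • c) = u • a + t • c := by
    simp only [smul_eq_mul]
    linear_combination (-(a + c)) * htu
  calc f a + f c = (t • f a + u • f c) + (u • f a + t • f c) := by
        rw [add_add_add_comm, ← add_smul, add_comm (u • f c), ← add_smul, htu, one_smul, one_smul]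
    _ ≤ f (t • a + u • c) + f (a + c - (t • a + u • c)) := by
        rw [reflect]; exact add_le_add h₁ h₂

end Concave

section NegMulLog

open Real

lemma neg_two_mul_log_two_mul_le_log_one_sub {x : ℝ} (hx : 0 ≤ x) (hx' : x ≤ 1 / 2) :
    -(2 * log 2 * x) ≤ log (1 - x) := by
  have bernoulli : (1 + -1 / 2 : ℝ) ^ (2 * x) ≤ 1 + 2 * x * (-1 / 2) :=
    rpow_one_add_le_one_add_mul_self (by norm_num) (by linarith) (by linarith)
  have h := log_le_log (by positivity) bernoulli
  rw [log_rpow (by norm_num), show (1 + -1 / 2 : ℝ) = 2⁻¹ by norm_num, log_inv,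
    show 1 + 2 * x * (-1 / 2) = 1 - x by ring] at h
  linarith

lemma negMulLog_one_sub_le {x : ℝ} (hx : 0 ≤ x) (hx' : x ≤ 1 / 2) :
    negMulLog (1 - x) ≤ 2 * log 2 * (x * (1 - x)) := by
  have h := mul_le_mul_of_nonneg_left (neg_two_mul_log_two_mul_le_log_one_sub hx hx')
    (show 0 ≤ 1 - x by linarith)
  rw [negMulLog]
  linarith

lemma mul_log_two_add_one_sub_two_mul_le_negMulLog {x : ℝ} (hx : 0 ≤ x) :
    x * (log 2 + (1 - 2 * x)) ≤ negMulLog x := by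
  rcases hx.eq_or_lt with rfl | hx
  · simp
  have tangent : log 2 + log x ≤ 2 * x - 1 := by
    rw [← log_mul two_ne_zero hx.ne']
    exact log_le_sub_one_of_pos (by positivity)
  rw [negMulLog]
  nlinarith

lemma negMulLog_one_sub_le_negMulLog_two_mul {x r : ℝ} (hx : 0 ≤ x) (hxr : x ≤ 3 / 2 * r)
    (hr : r ≤ 1 / 4) : negMulLog (1 - x) ≤ negMulLog (2 * r) := by
  have hr₀ : 0 ≤ r := by linarith
  have log_two_nonneg : 0 ≤ log 2 := log_nonneg one_le_two
  have log_two_le_two : log 2 ≤ 2 := by linarith [log_le_sub_one_of_pos (zero_lt_two' ℝ)]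
  calc negMulLog (1 - x) ≤ 2 * log 2 * (x * (1 - x)) := negMulLog_one_sub_le hx (by linarith)
    _ ≤ 2 * log 2 * (3 / 2 * r * (1 - 3 / 2 * r)) := by
        gcongr ?_ * ?_
        nlinarith
    _ ≤ 2 * r * (log 2 + (1 - 2 * (2 * r))) := by
        nlinarith [mul_nonneg hr₀ (mul_nonneg (sub_nonneg.2 log_two_le_two)
          (show 0 ≤ 1 - 4 * r by linarith)), mul_nonneg (mul_nonneg hr₀ hr₀) log_two_nonneg]
    _ ≤ negMulLog (2 * r) := mul_log_two_add_one_sub_two_mul_le_negMulLog (by positivity)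

lemma negMulLog_le_negMulLog_of_two_mul_le {x y : ℝ} (hx : 0 ≤ x) (hxy : 2 * x ≤ y)
    (hy : y ≤ 1 / 2) : negMulLog x ≤ negMulLog y := by
  rcases hx.eq_or_lt with rfl | hx
  · simpa using negMulLog_nonneg (by linarith) (by linarith)
  have hy₀ : 0 < y := by linarith
  have bernoulli : 1 + (y / x - 1) * 1 ≤ (1 + 1 : ℝ) ^ (y / x - 1) :=
    one_add_mul_self_le_rpow_one_add (by norm_num) (by
      rw [le_sub_iff_add_le, le_div_iff₀ hx]; linarith)
  have log_div_le : log y - log x ≤ (y / x - 1) * log 2 := by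
    have h := log_le_log (by rw [mul_one, add_sub_cancel]; positivity) bernoulli
    rwa [mul_one, add_sub_cancel, log_div hy₀.ne' hx.ne', one_add_one_eq_two,
      log_rpow two_pos] at h
  have log_le : log y ≤ -log 2 := by
    rw [← log_inv]; exact log_le_log hy₀ (by linarith)
  have h₁ : x * (log y - log x) ≤ (y - x) * log 2 := by
    calc x * (log y - log x) ≤ x * ((y / x - 1) * log 2) := by gcongr
      _ = (y - x) * log 2 := by field_simp
  have h₂ : (y - x) * log 2 ≤ (y - x) * -log y := by
    gcongr <;> linarith
  rw [negMulLog, negMulLog]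
  linarith

lemma negMulLog_sub_negMulLog_le_negMulLog_one_sub {x y : ℝ} (hx : 0 ≤ x) (hxy : x ≤ y)
    (hy : y ≤ 1) : negMulLog x - negMulLog y ≤ negMulLog (1 - (y - x)) := by
  have h := concaveOn_add_le_add_of_mem_Icc concaveOn_negMulLog hx
    (Set.mem_Ici.2 zero_le_one) ⟨hxy, hy⟩
  rw [negMulLog_one, add_zero, show x + 1 - y = 1 - (y - x) by ring] at h
  linarith

lemma negMulLog_sub_negMulLog_le_sub_mul_neg_log {x y : ℝ} (hx : 0 ≤ x) (hxy : x ≤ y) :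
    negMulLog y - negMulLog x ≤ (y - x) * -log y := by
  rcases hx.eq_or_lt with rfl | hx
  · simp [negMulLog]
  have h := mul_le_mul_of_nonneg_left (log_le_log hx hxy) hx.le
  rw [negMulLog, negMulLog]
  linarith

lemma negMulLog_sub_negMulLog_le_negMulLog_sub {x y : ℝ} (hx : 0 ≤ x) (hxy : x ≤ y) :
    negMulLog y - negMulLog x ≤ negMulLog (y - x) := by
  rcases hxy.eq_or_lt with rfl | hlt
  · simp
  refine (negMulLog_sub_negMulLog_le_sub_mul_neg_log hx hxy).trans ?_
  rw [negMulLog, neg_mul_comm]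
  have log_le : log (y - x) ≤ log y := log_le_log (sub_pos.2 hlt) (sub_le_self y hx)
  gcongr

lemma abs_negMulLog_sub_negMulLog_le_of_le {x y r : ℝ} (hx : 0 ≤ x) (hxy : x ≤ y) (hy : y ≤ 1)
    (hr : r ≤ 1 / 4) (hd : y - x ≤ 3 / 2 * r) (hd' : y ≤ 1 / 2 → y - x ≤ r) :
    |negMulLog x - negMulLog y| ≤ negMulLog (2 * r) := by
  have hr₀ : 0 ≤ r := by linarith
  refine abs_sub_le_iff.2 ⟨?_, ?_⟩
  · exact (negMulLog_sub_negMulLog_le_negMulLog_one_sub hx hxy hy).trans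
      (negMulLog_one_sub_le_negMulLog_two_mul (by linarith) hd hr)
  rcases le_total y (1 / 2) with h | h
  · exact (negMulLog_sub_negMulLog_le_negMulLog_sub hx hxy).trans
      (negMulLog_le_negMulLog_of_two_mul_le (by linarith) (by linarith [hd' h]) (by linarith))
  have neg_log_le : -log y ≤ log 2 := by
    rw [neg_le, ← log_inv]; exact log_le_log (by positivity) (by linarith)
  calc negMulLog y - negMulLog x ≤ (y - x) * -log y :=
        negMulLog_sub_negMulLog_le_sub_mul_neg_log hx hxy
    _ ≤ 2 * r * log 2 := by
        gcongr
        · exact neg_nonneg.2 (log_nonpos (by linarith) hy)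
        · linarith
    _ ≤ 2 * r * (log 2 + (1 - 2 * (2 * r))) := by gcongr; linarith
    _ ≤ negMulLog (2 * r) := mul_log_two_add_one_sub_two_mul_le_negMulLog (by positivity)

lemma abs_negMulLog_sub_negMulLog_le {p q r : ℝ} (hp : p ∈ Set.Icc 0 1) (hq : q ∈ Set.Icc 0 1)
    (hr : r ≤ 1 / 4) (h : |p - q| ≤ r * (1 / 2 + q)) :
    |negMulLog p - negMulLog q| ≤ negMulLog (2 * r) := by
  have hr₀ : 0 ≤ r :=
    nonneg_of_mul_nonneg_left ((abs_nonneg _).trans h) (by linarith [hq.1])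
  have h_all : |p - q| ≤ 3 / 2 * r := h.trans (by nlinarith [hq.2])
  have h_half : q ≤ 1 / 2 → |p - q| ≤ r := fun hq' => h.trans (by nlinarith)
  rcases le_total p q with hpq | hqp
  · rw [abs_of_nonpos (sub_nonpos.2 hpq), neg_sub] at h_all h_half
    exact abs_negMulLog_sub_negMulLog_le_of_le hp.1 hpq hq.2 hr h_all h_half
  · rw [abs_of_nonneg (sub_nonneg.2 hqp)] at h_all h_half
    rw [abs_sub_comm]
    exact abs_negMulLog_sub_negMulLog_le_of_le hq.1 hqp hp.2 hr h_all
      fun hp' => h_half (hqp.trans hp')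

lemma sum_negMulLog_le_log_card {ι : Type*} {s : Finset ι} {p : ι → ℝ} (hp : ∀ i ∈ s, 0 ≤ p i)
    (hs : ∑ i ∈ s, p i = 1) : ∑ i ∈ s, negMulLog (p i) ≤ log #s := by
  have hne : s.Nonempty := nonempty_of_sum_ne_zero (hs ▸ one_ne_zero)
  have hcard : (0 : ℝ) < #s := by exact_mod_cast hne.card_pos
  have jensen := concaveOn_negMulLog.le_map_sum (t := s) (w := fun _ => (#s : ℝ)⁻¹)
    (fun _ _ => by positivity) (by simp [hcard.ne']) hp
  simp only [smul_eq_mul, ← mul_sum, hs, mul_one] at jensen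
  rw [negMulLog, log_inv, neg_mul_neg] at jensen
  exact le_of_mul_le_mul_left jensen (by positivity)

end NegMulLog

section Normalization

variable {ι : Type*} [Fintype ι] {a b : ι → ℝ}

lemma abs_sum_sub_sum_le_card_mul {ε : ℝ} (h : ∀ i, |a i - b i| ≤ ε) :
    |∑ i, a i - ∑ i, b i| ≤ Fintype.card ι * ε := by
  rw [← sum_sub_distrib]
  exact (abs_sum_le_sum_abs _ _).trans
    ((sum_le_card_nsmul univ _ ε fun i _ => h i).trans_eq (by simp))

lemma abs_div_sum_sub_div_sum_le {ε : ℝ} (ha : 0 < ∑ i, a i) (hb : 0 < ∑ i, b i)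
    (hb₀ : ∀ i, 0 ≤ b i) (h : ∀ i, |a i - b i| ≤ ε) (i : ι) :
    |a i / ∑ j, a j - b i / ∑ j, b j| ≤
      (ε + b i / (∑ j, b j) * (Fintype.card ι * ε)) / ∑ j, a j := by
  have split : a i / ∑ j, a j - b i / ∑ j, b j =
      ((a i - b i) + b i / (∑ j, b j) * (∑ j, b j - ∑ j, a j)) / ∑ j, a j := by
    field_simp
    ring
  have hq : 0 ≤ b i / ∑ j, b j := div_nonneg (hb₀ i) hb.le
  rw [split, abs_div, abs_of_pos ha]
  gcongr
  refine (abs_add_le _ _).trans (add_le_add (h i) ?_)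
  rw [abs_mul, abs_of_nonneg hq, abs_sub_comm]
  gcongr
  exact abs_sum_sub_sum_le_card_mul h

lemma abs_div_sum_sub_div_sum_le_half {ε r : ℝ} (ha : 0 < ∑ i, a i) (hb : 0 < ∑ i, b i)
    (hb₀ : ∀ i, 0 ≤ b i) (h : ∀ i, |a i - b i| ≤ ε)
    (hε : Fintype.card ι * ε ≤ r * ∑ i, a i) (i : ι) :
    |a i / ∑ j, a j - b i / ∑ j, b j| ≤ r * (1 / 2 + b i / ∑ j, b j) := by
  have hε₀ : 0 ≤ ε := (abs_nonneg _).trans (h i)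
  have hr : 0 ≤ r := nonneg_of_mul_nonneg_left (hε.trans' (by positivity)) ha
  have hq : 0 ≤ b i / ∑ j, b j := div_nonneg (hb₀ i) hb.le
  rcases subsingleton_or_nontrivial ι with _ | _
  · rw [Fintype.sum_subsingleton _ i] at ha hb ⊢
    rw [Fintype.sum_subsingleton _ i, div_self ha.ne', div_self hb.ne', sub_self, abs_zero]
    positivity
  have two_le_card : (2 : ℝ) ≤ Fintype.card ι := by exact_mod_cast Fintype.one_lt_card (α := ι)
  have hε' : ε ≤ r * (∑ j, a j) / 2 := by nlinarith
  calc |a i / ∑ j, a j - b i / ∑ j, b j|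
      ≤ (ε + b i / (∑ j, b j) * (Fintype.card ι * ε)) / ∑ j, a j :=
        abs_div_sum_sub_div_sum_le ha hb hb₀ h i
    _ ≤ (r * (∑ j, a j) / 2 + b i / (∑ j, b j) * (r * ∑ j, a j)) / ∑ j, a j := by gcongr
    _ = r * (1 / 2 + b i / ∑ j, b j) := by field_simp

end Normalization

section Indicator

open scoped symmDiff

variable {α E : Type*} [NormedAddCommGroup E]

lemma norm_indicator_const_sub_indicator_const_le (s t : Set α) (c e : E) (x : α) :
    ‖s.indicator (fun _ => c) x - t.indicator (fun _ => e) x‖ ≤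
      (s ∆ t).indicator (fun _ => ‖c‖) x + t.indicator (fun _ => ‖c - e‖) x := by
  by_cases hs : x ∈ s <;> by_cases ht : x ∈ t <;>
    simp [Set.mem_symmDiff, hs, ht, norm_le_norm_add_norm_sub]

variable [MeasurableSpace α] {μ : Measure α}

lemma integral_norm_indicator_const_sub_indicator_const_le {s t : Set α} (hs : MeasurableSet s)
    (ht : MeasurableSet t) (hsμ : μ s ≠ ⊤) (htμ : μ t ≠ ⊤) (c e : E) :
    ∫ x, ‖s.indicator (fun _ => c) x - t.indicator (fun _ => e) x‖ ∂μ ≤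
      μ.real (s ∆ t) * ‖c‖ + μ.real t * ‖c - e‖ := by
  have integrable_symmDiff : Integrable ((s ∆ t).indicator fun _ => ‖c‖) μ :=
    (integrable_indicator_iff (hs.symmDiff ht)).2 (integrableOn_const (by finiteness))
  have integrable_right : Integrable (t.indicator fun _ => ‖c - e‖) μ :=
    (integrable_indicator_iff ht).2 (integrableOn_const htμ)
  calc ∫ x, ‖s.indicator (fun _ => c) x - t.indicator (fun _ => e) x‖ ∂μ
      ≤ ∫ x, ((s ∆ t).indicator (fun _ => ‖c‖) x + t.indicator (fun _ => ‖c - e‖) x) ∂μ :=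
        integral_mono_of_nonneg (.of_forall fun _ => norm_nonneg _)
          (integrable_symmDiff.add integrable_right)
          (.of_forall (norm_indicator_const_sub_indicator_const_le s t c e))
    _ = μ.real (s ∆ t) * ‖c‖ + μ.real t * ‖c - e‖ := by
        rw [integral_add integrable_symmDiff integrable_right,
          integral_indicator_const _ (hs.symmDiff ht), integral_indicator_const _ ht,
          smul_eq_mul, smul_eq_mul]

lemma integral_norm_sum_sub_sum_le {ι : Type*} {s : Finset ι} {f g : ι → α → E}
    (hf : ∀ i ∈ s, Integrable (f i) μ) (hg : ∀ i ∈ s, Integrable (g i) μ) :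
    ∫ x, ‖∑ i ∈ s, f i x - ∑ i ∈ s, g i x‖ ∂μ ≤ ∑ i ∈ s, ∫ x, ‖f i x - g i x‖ ∂μ := by
  have hfg : ∀ i ∈ s, Integrable (fun x => ‖f i x - g i x‖) μ := fun i hi =>
    ((hf i hi).sub (hg i hi)).norm
  rw [← integral_finsetSum s hfg]
  refine integral_mono_of_nonneg (.of_forall fun _ => norm_nonneg _)
    (integrable_finsetSum s hfg) (.of_forall fun x => ?_)
  simp only [← sum_sub_distrib]
  exact norm_sum_le _ _

lemma Icc_symmDiff_Icc_subset {β : Type*} [LinearOrder β] (a b c d : β) :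
    Set.Icc a b ∆ Set.Icc c d ⊆ Set.uIcc a c ∪ Set.uIcc b d := by
  intro t
  simp only [Set.mem_symmDiff, Set.mem_union, Set.mem_Icc, Set.mem_uIcc]
  grind

lemma volume_real_Icc_symmDiff_Icc_le (a b c d : ℝ) :
    volume.real (Set.Icc a b ∆ Set.Icc c d) ≤ |a - c| + |b - d| := by
  calc volume.real (Set.Icc a b ∆ Set.Icc c d)
      ≤ volume.real (Set.uIcc a c ∪ Set.uIcc b d) :=
        measureReal_mono (Icc_symmDiff_Icc_subset a b c d)
          (isCompact_uIcc.union isCompact_uIcc).measure_ne_top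
    _ ≤ volume.real (Set.uIcc a c) + volume.real (Set.uIcc b d) := measureReal_union_le _ _
    _ = |a - c| + |b - d| := by
        rw [Real.volume_real_interval, Real.volume_real_interval, abs_sub_comm c, abs_sub_comm d]

end Indicator

section Barcode

variable {n : ℕ}

/-- The relative length `ℓ_i / L` of the `i`-th interval of a barcode. The relative lengths form the
probability vector whose entropy the ES-function localizes in `t`. -/
noncomputable def relLen (x y : Fin n → ℝ) (i : Fin n) : ℝ := (y i - x i) / lenSum x y

section

variable {x y : Fin n → ℝ}

lemma relLen_nonneg (h : ∀ i, x i ≤ y i) (hL : 0 < lenSum x y) (i : Fin n) : 0 ≤ relLen x y i :=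
  div_nonneg (sub_nonneg.2 (h i)) hL.le

lemma sum_relLen (hL : 0 < lenSum x y) : ∑ i, relLen x y i = 1 := by
  simp only [relLen, ← sum_div]
  exact div_self hL.ne'

lemma relLen_mem_Icc (h : ∀ i, x i ≤ y i) (hL : 0 < lenSum x y) (i : Fin n) :
    relLen x y i ∈ Set.Icc 0 1 :=
  ⟨relLen_nonneg h hL i,
    (single_le_sum (fun j _ => relLen_nonneg h hL j) (mem_univ i)).trans_eq (sum_relLen hL)⟩

lemma negMulLog_relLen_nonneg (h : ∀ i, x i ≤ y i) (hL : 0 < lenSum x y) (i : Fin n) :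
    0 ≤ Real.negMulLog (relLen x y i) :=
  Real.negMulLog_nonneg (relLen_mem_Icc h hL i).1 (relLen_mem_Icc h hL i).2

end

lemma ES_eq_sum_indicator (x y : Fin n → ℝ) (t : ℝ) :
    ES x y t =
      ∑ i, (Set.Icc (x i) (y i)).indicator (fun _ => Real.negMulLog (relLen x y i)) t := by
  rw [ES, ← sum_neg_distrib]
  refine sum_congr rfl fun i _ => ?_
  by_cases ht : x i ≤ t ∧ t ≤ y i <;> simp [Set.indicator, ht, Real.negMulLog, relLen]

lemma lenSum_comp_perm (γ : Equiv.Perm (Fin n)) (x y : Fin n → ℝ) :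
    lenSum (x ∘ γ) (y ∘ γ) = lenSum x y :=
  Equiv.sum_comp γ fun i => y i - x i

lemma ES_comp_perm (γ : Equiv.Perm (Fin n)) (x y : Fin n → ℝ) (t : ℝ) :
    ES (x ∘ γ) (y ∘ γ) t = ES x y t := by
  rw [ES, ES, lenSum_comp_perm]
  exact congrArg Neg.neg (Equiv.sum_comp γ fun i => if x i ≤ t ∧ t ≤ y i then
    ((y i - x i) / lenSum x y) * Real.log ((y i - x i) / lenSum x y) else 0)

lemma exists_perm_pcost_le_dInf (xa ya xb yb : Fin n → ℝ) :
    ∃ γ : Equiv.Perm (Fin n), ∀ i, pcost xa ya xb yb γ i ≤ dInf xa ya xb yb := by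
  obtain ⟨γ, -, hγ⟩ := exists_mem_eq_inf' univ_nonempty
    fun γ : Equiv.Perm (Fin n) => ⨆ i, pcost xa ya xb yb γ i
  exact ⟨γ, fun i => (le_ciSup (Set.finite_range _).bddAbove i).trans_eq hγ.symm⟩

variable {xa ya xb yb : Fin n → ℝ}

lemma integral_abs_ES_sub_ES_le_sum (hA : ∀ i, xa i ≤ ya i) (hB : ∀ i, xb i ≤ yb i)
    (hLa : 0 < lenSum xa ya) :
    ∫ t, |ES xa ya t - ES xb yb t| ≤
      ∑ i, ((|xa i - xb i| + |ya i - yb i|) * Real.negMulLog (relLen xa ya i) +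
        (yb i - xb i) *
          |Real.negMulLog (relLen xa ya i) - Real.negMulLog (relLen xb yb i)|) := by
  have integrable_indicator_Icc : ∀ a b c : ℝ,
      Integrable ((Set.Icc a b).indicator fun _ => c) := fun a b c =>
    (integrable_indicator_iff measurableSet_Icc).2 (integrableOn_const (by simp))
  simp only [ES_eq_sum_indicator, ← Real.norm_eq_abs (_ - _ : ℝ)]
  refine (integral_norm_sum_sub_sum_le (fun i _ => integrable_indicator_Icc _ _ _)
    fun i _ => integrable_indicator_Icc _ _ _).trans (sum_le_sum fun i _ => ?_)
  refine (integral_norm_indicator_const_sub_indicator_const_le measurableSet_Icc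
    measurableSet_Icc (by simp) (by simp) _ _).trans ?_
  rw [Real.volume_real_Icc_of_le (hB i), Real.norm_of_nonneg (negMulLog_relLen_nonneg hA hLa i)]
  gcongr
  · exact negMulLog_relLen_nonneg hA hLa i
  · exact volume_real_Icc_symmDiff_Icc_le _ _ _ _

lemma abs_relLen_sub_relLen_le {d r : ℝ} (hB : ∀ i, xb i ≤ yb i) (hLa : 0 < lenSum xa ya)
    (hLb : 0 < lenSum xb yb) (hx : ∀ i, |xa i - xb i| ≤ d) (hy : ∀ i, |ya i - yb i| ≤ d)
    (hr : 2 * n * d ≤ r * lenSum xa ya) (i : Fin n) :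
    |relLen xa ya i - relLen xb yb i| ≤ r * (1 / 2 + relLen xb yb i) := by
  refine abs_div_sum_sub_div_sum_le_half (a := fun i => ya i - xa i) (b := fun i => yb i - xb i)
    hLa hLb (fun i => sub_nonneg.2 (hB i)) (ε := 2 * d) (fun i => ?_) ?_ i
  · rw [sub_sub_sub_comm]
    exact (abs_sub _ _).trans (by linarith [hx i, hy i])
  · rw [Fintype.card_fin]
    exact (by ring : (n : ℝ) * (2 * d) = 2 * n * d).trans_le hr

theorem integral_abs_ES_sub_ES_le {d r : ℝ} (hA : ∀ i, xa i ≤ ya i) (hB : ∀ i, xb i ≤ yb i)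
    (hLa : 0 < lenSum xa ya) (hLb : 0 < lenSum xb yb) (hx : ∀ i, |xa i - xb i| ≤ d)
    (hy : ∀ i, |ya i - yb i| ≤ d) (hr : 2 * n * d ≤ r * lenSum xa ya) (hr4 : r ≤ 1 / 4) :
    ∫ t, |ES xa ya t - ES xb yb t| ≤
      lenSum xb yb * Real.negMulLog (2 * r) + 2 * d * Real.log n := by
  obtain ⟨i₀, -, -⟩ := exists_ne_zero_of_sum_ne_zero hLa.ne'
  have hd : 0 ≤ d := (abs_nonneg _).trans (hx i₀)
  have entropy_le : ∑ i, Real.negMulLog (relLen xa ya i) ≤ Real.log n := by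
    simpa using sum_negMulLog_le_log_card (s := univ) (fun i _ => relLen_nonneg hA hLa i)
      (sum_relLen hLa)
  calc ∫ t, |ES xa ya t - ES xb yb t|
      ≤ ∑ i, ((|xa i - xb i| + |ya i - yb i|) * Real.negMulLog (relLen xa ya i) +
          (yb i - xb i) *
            |Real.negMulLog (relLen xa ya i) - Real.negMulLog (relLen xb yb i)|) :=
        integral_abs_ES_sub_ES_le_sum hA hB hLa
    _ ≤ ∑ i, (2 * d * Real.negMulLog (relLen xa ya i) +
          (yb i - xb i) * Real.negMulLog (2 * r)) := by
        gcongr with i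
        · exact negMulLog_relLen_nonneg hA hLa i
        · linarith [hx i, hy i]
        · exact sub_nonneg.2 (hB i)
        · exact abs_negMulLog_sub_negMulLog_le (relLen_mem_Icc hA hLa i) (relLen_mem_Icc hB hLb i)
            hr4 (abs_relLen_sub_relLen_le hB hLa hLb hx hy hr i)
    _ = lenSum xb yb * Real.negMulLog (2 * r) +
          2 * d * ∑ i, Real.negMulLog (relLen xa ya i) := by
        rw [sum_add_distrib, ← mul_sum, ← sum_mul, add_comm, lenSum]
    _ ≤ lenSum xb yb * Real.negMulLog (2 * r) + 2 * d * Real.log n := by gcongr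

theorem integral_abs_ES_sub_ES_le_min {d r : ℝ} (hA : ∀ i, xa i ≤ ya i) (hB : ∀ i, xb i ≤ yb i)
    (hLa : 0 < lenSum xa ya) (hLb : 0 < lenSum xb yb) (hx : ∀ i, |xa i - xb i| ≤ d)
    (hy : ∀ i, |ya i - yb i| ≤ d) (hr : 2 * n * d ≤ r * max (lenSum xa ya) (lenSum xb yb))
    (hr4 : r ≤ 1 / 4) :
    ∫ t, |ES xa ya t - ES xb yb t| ≤
      min (lenSum xa ya) (lenSum xb yb) * Real.negMulLog (2 * r) + 2 * d * Real.log n := by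
  wlog h : lenSum xb yb ≤ lenSum xa ya generalizing xa ya xb yb
  · simpa only [abs_sub_comm (ES xb yb _), min_comm (lenSum xb yb)] using
      this hB hA hLb hLa (fun i => abs_sub_comm (xa i) _ ▸ hx i)
        (fun i => abs_sub_comm (ya i) _ ▸ hy i) (max_comm (lenSum xa ya) _ ▸ hr) (le_of_not_ge h)
  rw [min_eq_right h]
  exact integral_abs_ES_sub_ES_le hA hB hLa hLb hx hy (max_eq_left h ▸ hr) hr4

end Barcode

/-- Stability of the ES-function: if the relative error
`r_∞(A,B) = 2·n_max·d_∞(A,B)/L_max` is at most `1/4` then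
`‖S(A) − S(B)‖₁ ≤ −2·L_min·r_∞·log(2r_∞) + 2·d_∞(A,B)·log(n_max)` and consequently
`‖S(A) − S(B)‖₁ ≤ 2·r_∞·(−L_min·log(2r_∞) + L_max·log(n_max)/n_max)`.
(When `r_∞ = 0`, `Real.log 0 = 0` realizes the convention that the log terms vanish.) -/
theorem ES_stability {n : ℕ} (xa ya xb yb : Fin n → ℝ)
    (hA : ∀ i, xa i ≤ ya i) (hB : ∀ i, xb i ≤ yb i)
    (hLa : 0 < lenSum xa ya) (hLb : 0 < lenSum xb yb)
    (r : ℝ) (hr : r = 2 * (n : ℝ) * dInf xa ya xb yb / max (lenSum xa ya) (lenSum xb yb))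
    (hr4 : r ≤ 1 / 4) :
    (∫ t : ℝ, |ES xa ya t - ES xb yb t|) ≤
      -(2 * min (lenSum xa ya) (lenSum xb yb) * r * Real.log (2 * r)) +
        2 * dInf xa ya xb yb * Real.log n ∧
    (∫ t : ℝ, |ES xa ya t - ES xb yb t|) ≤
      2 * r * (-(min (lenSum xa ya) (lenSum xb yb) * Real.log (2 * r)) +
        max (lenSum xa ya) (lenSum xb yb) * Real.log n / n) := by
  obtain ⟨γ, hγ⟩ := exists_perm_pcost_le_dInf xa ya xb yb
  obtain ⟨i₀, -, -⟩ := exists_ne_zero_of_sum_ne_zero hLa.ne'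
  have hn : (0 : ℝ) < n := Nat.cast_pos.2 i₀.pos
  set d := dInf xa ya xb yb
  have hd : 0 ≤ d := (le_max_of_le_left (abs_nonneg _)).trans (hγ i₀)
  have hr₀ : 0 ≤ r := hr ▸ by positivity
  have hrL : 2 * n * d = r * max (lenSum xa ya) (lenSum xb yb) := by rw [hr]; field_simp
  have bound : (∫ t : ℝ, |ES xa ya t - ES xb yb t|) ≤
      -(2 * min (lenSum xa ya) (lenSum xb yb) * r * Real.log (2 * r)) + 2 * d * Real.log n := by
    have := integral_abs_ES_sub_ES_le_min (xb := xb ∘ γ) (yb := yb ∘ γ) hA (fun i => hB (γ i)) hLa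
      (by rwa [lenSum_comp_perm]) (fun i => (le_max_left _ _).trans (hγ i))
      (fun i => (le_max_right _ _).trans (hγ i)) (by rw [lenSum_comp_perm, hrL]) hr4
    simp only [ES_comp_perm, lenSum_comp_perm, Real.negMulLog] at this
    linarith
  refine ⟨bound, bound.trans ?_⟩
  have hd_eq : 2 * d = r * max (lenSum xa ya) (lenSum xb yb) / n := by rw [← hrL]; field_simp
  have : 0 ≤ r * (max (lenSum xa ya) (lenSum xb yb) * Real.log n / n) := by positivity
  rw [hd_eq]
  linear_combination this
end
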